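/- (Optimality of the constant 1/2 in classical universal testing.) Fix ε ∈ (0,1) and C > 1/2. Then there exist distinct probability distributions P₀ and P₁ on the two-element alphabet {0,1} such that for every sequence of acceptance regions A_n ⊆ {0,1}^n satisfying P₀^{⊗n}(A_n) ≥ 1 − ε for all n (type I error at most ε), one has liminf_{n→∞} −(1/n)·ln P₁^{⊗n}(A_n) < C·(|P₀(0) − P₁(0)| + |P₀(1) − P₁(1)|)². Equivalently, no test achieving type I error at most ε can attain the type II error exponent C·‖P₀ − P₁‖₁² for all pairs of distributions when C > 1/2. -/

import Mathlib

open MeasureTheory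

/-!
By the converse half of Stein's lemma, a test whose type I error stays away from `1` has type II
error exponent at most `D(P₀ ‖ P₁)`: on the event that the log-likelihood ratio is at most
`n (D + δ)` the product measure `P₀ⁿ` is dominated by `exp (n (D + δ)) P₁ⁿ`, and by the law of
large numbers that event has `P₀ⁿ`-probability tending to `1`. Pinsker's inequality
`D(P₀ ‖ P₁) ≥ ‖P₀ - P₁‖₁² / 2` is sharp to leading order at the fair coin: if `P₁` has bias `q`
and `u = 4 q (1 - q)`, then `‖P₀ - P₁‖₁² = 1 - u` and `D(P₀ ‖ P₁) = -log u / 2 ≤ (1 - u) / (2 u)`,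
which is below `C (1 - u)` once `q ≠ 1 / 2` is close to `1 / 2`.
-/

open Filter InformationTheory ProbabilityTheory unitInterval
open scoped ENNReal Topology

section ProductDensity

variable {ι : Type*} [Fintype ι] {X : ι → Type*} [∀ i, MeasurableSpace (X i)]

theorem lintegral_pi_prod_eq_prod_lintegral (ν : ∀ i, Measure (X i))
    [∀ i, IsProbabilityMeasure (ν i)] {f : ∀ i, X i → ℝ≥0∞} (hf : ∀ i, Measurable (f i)) :
    ∫⁻ x, ∏ i, f i (x i) ∂Measure.pi ν = ∏ i, ∫⁻ t, f i t ∂ν i := by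
  rw [lintegral_prod_eq_prod_lintegral_of_indepFun _ _
    (iIndepFun_pi fun i ↦ (hf i).aemeasurable) (by fun_prop)]
  exact Finset.prod_congr rfl fun i _ ↦ (measurePreserving_eval ν i).lintegral_comp (hf i)

theorem pi_withDensity (ν : ∀ i, Measure (X i)) [∀ i, IsProbabilityMeasure (ν i)]
    {f : ∀ i, X i → ℝ≥0∞} (hf : ∀ i, Measurable (f i))
    [∀ i, SigmaFinite ((ν i).withDensity (f i))] :
    Measure.pi (fun i ↦ (ν i).withDensity (f i)) =
      (Measure.pi ν).withDensity fun x ↦ ∏ i, f i (x i) := by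
  refine Measure.pi_eq fun s hs ↦ ?_
  have indicator_prod (x : ∀ i, X i) :
      (Set.univ.pi s).indicator (fun x ↦ ∏ i, f i (x i)) x =
        ∏ i, (s i).indicator (f i) (x i) := by
    classical
    simp only [Set.indicator_apply, Set.mem_univ_pi, Finset.prod_ite_zero, Finset.mem_univ,
      true_imp_iff]
  rw [withDensity_apply _ (.univ_pi hs), ← lintegral_indicator (.univ_pi hs)]
  simp_rw [indicator_prod]
  rw [lintegral_pi_prod_eq_prod_lintegral ν fun i ↦ (hf i).indicator (hs i)]
  exact Finset.prod_congr rfl fun i _ ↦ by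
    rw [lintegral_indicator (hs i), withDensity_apply _ (hs i)]

end ProductDensity

section ChangeOfMeasure

theorem rnDeriv_le_ofReal_exp_llr {X : Type*} [MeasurableSpace X] (μ ν : Measure X)
    [SigmaFinite μ] : ∀ᵐ x ∂ν, μ.rnDeriv ν x ≤ ENNReal.ofReal (Real.exp (llr μ ν x)) := by
  filter_upwards [μ.rnDeriv_ne_top ν] with x hx
  rw [← ENNReal.ofReal_toReal hx]
  exact ENNReal.ofReal_le_ofReal (Real.le_exp_log _)

variable {ι : Type*} [Fintype ι] {X : ι → Type*} [∀ i, MeasurableSpace (X i)]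

theorem prod_rnDeriv_le_ofReal_exp_sum_llr (μ ν : ∀ i, Measure (X i))
    [∀ i, SigmaFinite (μ i)] [∀ i, SigmaFinite (ν i)] :
    ∀ᵐ x ∂Measure.pi ν, ∏ i, (μ i).rnDeriv (ν i) (x i) ≤
      ENNReal.ofReal (Real.exp (∑ i, llr (μ i) (ν i) (x i))) := by
  have factor_le : ∀ᵐ x ∂Measure.pi ν, ∀ i,
      (μ i).rnDeriv (ν i) (x i) ≤ ENNReal.ofReal (Real.exp (llr (μ i) (ν i) (x i))) :=
    ae_all_iff.2 fun i ↦
      (Measure.quasiMeasurePreserving_eval ν i).ae (rnDeriv_le_ofReal_exp_llr (μ i) (ν i))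
  filter_upwards [factor_le] with x hx
  rw [Real.exp_sum, ENNReal.ofReal_prod_of_nonneg fun i _ ↦ (Real.exp_pos _).le]
  exact Finset.prod_le_prod' fun i _ ↦ hx i

variable {μ ν : ∀ i, Measure (X i)} [∀ i, IsProbabilityMeasure (ν i)]

theorem pi_eq_withDensity_prod_rnDeriv [∀ i, SigmaFinite (μ i)] (hμν : ∀ i, μ i ≪ ν i) :
    Measure.pi μ = (Measure.pi ν).withDensity fun x ↦ ∏ i, (μ i).rnDeriv (ν i) (x i) := by
  have withDensity_eq (i : ι) : (ν i).withDensity ((μ i).rnDeriv (ν i)) = μ i :=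
    Measure.withDensity_rnDeriv_eq _ _ (hμν i)
  have (i : ι) : SigmaFinite ((ν i).withDensity ((μ i).rnDeriv (ν i))) := by
    rw [withDensity_eq]
    infer_instance
  rw [← pi_withDensity ν fun i ↦ Measure.measurable_rnDeriv _ _]
  simp_rw [withDensity_eq]

theorem restrict_pi_le_exp_smul_pi [∀ i, SigmaFinite (μ i)] (hμν : ∀ i, μ i ≪ ν i) (t : ℝ) :
    (Measure.pi μ).restrict {x | ∑ i, llr (μ i) (ν i) (x i) ≤ t} ≤
      ENNReal.ofReal (Real.exp t) • Measure.pi ν := by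
  set S : Set (∀ i, X i) := {x | ∑ i, llr (μ i) (ν i) (x i) ≤ t}
  have hS : MeasurableSet S := measurableSet_le
    (Finset.measurable_fun_sum _ fun i _ ↦ (measurable_llr _ _).comp (measurable_pi_apply i))
    measurable_const
  have density_le : (fun x ↦ ∏ i, (μ i).rnDeriv (ν i) (x i))
      ≤ᵐ[(Measure.pi ν).restrict S] fun _ ↦ ENNReal.ofReal (Real.exp t) := by
    filter_upwards [ae_restrict_of_ae (prod_rnDeriv_le_ofReal_exp_sum_llr μ ν),
      ae_restrict_mem hS] with x hx hxS
    exact hx.trans (ENNReal.ofReal_le_ofReal (Real.exp_le_exp.2 hxS))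
  calc (Measure.pi μ).restrict S
      = ((Measure.pi ν).restrict S).withDensity fun x ↦ ∏ i, (μ i).rnDeriv (ν i) (x i) := by
        rw [pi_eq_withDensity_prod_rnDeriv hμν, restrict_withDensity hS]
    _ ≤ ((Measure.pi ν).restrict S).withDensity fun _ ↦ ENNReal.ofReal (Real.exp t) :=
        withDensity_mono density_le
    _ = ENNReal.ofReal (Real.exp t) • (Measure.pi ν).restrict S := withDensity_const _
    _ ≤ ENNReal.ofReal (Real.exp t) • Measure.pi ν := by
        gcongr
        exact Measure.restrict_le_self

theorem pi_real_le_exp_mul_add_pi_real_sum_llr_gt [∀ i, IsFiniteMeasure (μ i)]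
    (hμν : ∀ i, μ i ≪ ν i) (A : Set (∀ i, X i)) (t : ℝ) :
    (Measure.pi μ).real A ≤ Real.exp t * (Measure.pi ν).real A +
      (Measure.pi μ).real {x | t < ∑ i, llr (μ i) (ν i) (x i)} := by
  set S : Set (∀ i, X i) := {x | ∑ i, llr (μ i) (ν i) (x i) ≤ t}
  have hSc : {x | t < ∑ i, llr (μ i) (ν i) (x i)} = Sᶜ := by
    ext x
    simp [S]
  have inter_le : (Measure.pi μ).real (A ∩ S) ≤ Real.exp t * (Measure.pi ν).real A := by
    have h : Measure.pi μ (A ∩ S) ≤ ENNReal.ofReal (Real.exp t) * Measure.pi ν A :=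
      (Measure.le_restrict_apply S A).trans (restrict_pi_le_exp_smul_pi hμν t A)
    simpa [measureReal_def, (Real.exp_pos t).le] using ENNReal.toReal_mono (by finiteness) h
  calc (Measure.pi μ).real A
      ≤ (Measure.pi μ).real (A ∩ S ∪ Sᶜ) :=
        measureReal_mono fun x hx ↦ by by_cases hxS : x ∈ S <;> simp [hx, hxS]
    _ ≤ (Measure.pi μ).real (A ∩ S) + (Measure.pi μ).real Sᶜ := measureReal_union_le _ _
    _ ≤ _ := by
        rw [hSc]
        gcongr

end ChangeOfMeasure

section SteinConverse

variable {X : Type*} [MeasurableSpace X] {μ : Measure X}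

theorem ae_tendsto_average_of_hasLaw {Ω : Type*} [MeasurableSpace Ω] {P : Measure Ω}
    {Y : ℕ → Ω → X} (hlaw : ∀ i, HasLaw (Y i) μ P) (hindep : iIndepFun Y P)
    {f : X → ℝ} (hfm : Measurable f) (hf : Integrable f μ) :
    ∀ᵐ ω ∂P, Tendsto (fun n : ℕ ↦ (∑ i ∈ Finset.range n, f (Y i ω)) / n) atTop
      (𝓝 (∫ t, f t ∂μ)) := by
  have integral_eq : ∫ ω, f (Y 0 ω) ∂P = ∫ t, f t ∂μ :=
    (hlaw 0).integral_comp hf.aestronglyMeasurable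
  have integrable_comp : Integrable (f ∘ Y 0) P := by
    rw [← (hlaw 0).map_eq] at hf
    exact hf.comp_aemeasurable (hlaw 0).aemeasurable
  rw [← integral_eq]
  exact strong_law_ae_real (fun i ↦ f ∘ Y i) integrable_comp
    (fun i j hij ↦ (hindep.indepFun hij).comp hfm hfm)
    fun i ↦ ((hlaw i).identDistrib (hlaw 0)).comp hfm

variable [IsProbabilityMeasure μ]

theorem tendsto_pi_real_abs_average_sub_integral_ge {f : X → ℝ} (hfm : Measurable f)
    (hf : Integrable f μ) {δ : ℝ} (hδ : 0 < δ) :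
    Tendsto (fun n : ℕ ↦ (Measure.pi fun _ : Fin n ↦ μ).real
      {x | δ ≤ |(∑ i, f (x i)) / n - ∫ t, f t ∂μ|}) atTop (𝓝 0) := by
  obtain ⟨Ω, _, P, Y, hYm, hlaw, hindep, _⟩ := exists_iid ℕ μ
  have average_measurable (n : ℕ) :
      Measurable fun ω ↦ (∑ i ∈ Finset.range n, f (Y i ω)) / n := by
    fun_prop
  have average_tendsto := tendstoInMeasure_iff_measureReal_norm.1
    (tendstoInMeasure_of_tendsto_ae (fun n ↦ (average_measurable n).aestronglyMeasurable)
      (ae_tendsto_average_of_hasLaw hlaw hindep hfm hf)) δ hδ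
  refine average_tendsto.congr fun n ↦ ?_
  have sample_law : HasLaw (fun ω (i : Fin n) ↦ Y i ω) (Measure.pi fun _ : Fin n ↦ μ) P :=
    (hindep.precomp Fin.val_injective).hasLaw_pi fun i ↦ hlaw i
  rw [← sample_law.map_eq, map_measureReal_apply (by fun_prop) (by measurability)]
  simp [Finset.sum_range]

theorem eventually_neg_log_div_lt_of_le_exp_mul {y : ℕ → ℝ} {c κ κ' : ℝ} (hc : 0 < c)
    (hκ : κ < κ') (hy : ∀ᶠ n : ℕ in atTop, c ≤ Real.exp (n * κ) * y n) :
    ∀ᶠ n : ℕ in atTop, -(1 / (n : ℝ)) * Real.log (y n) < κ' := by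
  have const_div_lt : ∀ᶠ n : ℕ in atTop, -Real.log c / (n : ℝ) < κ' - κ :=
    (tendsto_const_div_atTop_nhds_zero_nat _).eventually (gt_mem_nhds (sub_pos.2 hκ))
  filter_upwards [hy, const_div_lt, eventually_gt_atTop 0] with n hyn hcn hn
  have hn' : (0 : ℝ) < n := mod_cast hn
  have y_pos : 0 < y n := pos_of_mul_pos_right (hc.trans_le hyn) (Real.exp_pos _).le
  have log_le : Real.log c ≤ n * κ + Real.log (y n) := by
    simpa [Real.log_mul, y_pos.ne'] using Real.log_le_log hc hyn
  calc -(1 / (n : ℝ)) * Real.log (y n)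
      ≤ κ + -Real.log c / n := by
        field_simp
        linarith
    _ < κ' := by linarith

variable {ν : Measure X} [IsProbabilityMeasure ν]

theorem eventually_neg_log_pi_real_lt_of_klDiv_lt
    (hkl : klDiv μ ν ≠ ∞) {κ : ℝ} (hκ : (klDiv μ ν).toReal < κ) {δ : ℝ} (hδ : 0 < δ)
    {A : (n : ℕ) → Set (Fin n → X)}
    (hA : ∀ᶠ n in atTop, δ ≤ (Measure.pi fun _ : Fin n ↦ μ).real (A n)) :
    ∀ᶠ n : ℕ in atTop,
      -(1 / (n : ℝ)) * Real.log ((Measure.pi fun _ : Fin n ↦ ν).real (A n)) < κ := by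
  obtain ⟨hμν, hint⟩ := klDiv_ne_top_iff.1 hkl
  rw [toReal_klDiv_of_measure_eq hμν (by simp)] at hκ
  obtain ⟨κ', hκ', hκ'κ⟩ := exists_between hκ
  have atypical_small := (tendsto_pi_real_abs_average_sub_integral_ge (measurable_llr μ ν) hint
    (sub_pos.2 hκ')).eventually (gt_mem_nhds (half_pos hδ))
  refine eventually_neg_log_div_lt_of_le_exp_mul (half_pos hδ) hκ'κ ?_
  filter_upwards [hA, atypical_small, eventually_gt_atTop 0] with n hAn hsmall hn
  have hn' : (0 : ℝ) < n := mod_cast hn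
  have large_subset : {x : Fin n → X | n * κ' < ∑ i, llr μ ν (x i)} ⊆
      {x | κ' - ∫ t, llr μ ν t ∂μ ≤ |(∑ i, llr μ ν (x i)) / n - ∫ t, llr μ ν t ∂μ|} := by
    intro x (hx : n * κ' < _)
    have : κ' ≤ (∑ i, llr μ ν (x i)) / n := by
      rw [le_div_iff₀ hn', mul_comm]
      exact hx.le
    exact (sub_le_sub_right this _).trans (le_abs_self _)
  have change_of_measure := pi_real_le_exp_mul_add_pi_real_sum_llr_gt
    (μ := fun _ : Fin n ↦ μ) (fun _ ↦ hμν) (A n) (n * κ')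
  have large_le := measureReal_mono (μ := Measure.pi fun _ : Fin n ↦ μ) large_subset
  linarith

theorem liminf_neg_log_pi_real_le_klDiv (hkl : klDiv μ ν ≠ ∞)
    {δ : ℝ} (hδ : 0 < δ) {A : (n : ℕ) → Set (Fin n → X)}
    (hA : ∀ᶠ n in atTop, δ ≤ (Measure.pi fun _ : Fin n ↦ μ).real (A n)) :
    liminf (fun n : ℕ ↦ -(1 / (n : ℝ)) * Real.log ((Measure.pi fun _ : Fin n ↦ ν).real (A n)))
      atTop ≤ (klDiv μ ν).toReal := by
  refine le_of_forall_gt_imp_ge_of_dense fun κ hκ ↦ ?_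
  have exponent_nonneg (n : ℕ) :
      0 ≤ -(1 / (n : ℝ)) * Real.log ((Measure.pi fun _ : Fin n ↦ ν).real (A n)) :=
    mul_nonneg_of_nonpos_of_nonpos (by simp)
      (Real.log_nonpos measureReal_nonneg measureReal_le_one)
  have exponent_lt := eventually_neg_log_pi_real_lt_of_klDiv_lt hkl hκ hδ hA
  exact liminf_le_of_frequently_le (exponent_lt.mono fun _ ↦ le_of_lt).frequently
    (isBoundedUnder_of ⟨0, exponent_nonneg⟩)

end SteinConverse

section Bernoulli

theorem rnDeriv_apply_of_singleton {X : Type*} [MeasurableSpace X] [MeasurableSingletonClass X]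
    {μ ν : Measure X} [SigmaFinite μ] [IsFiniteMeasure ν] (hμν : μ ≪ ν) {x : X}
    (hx : ν {x} ≠ 0) : μ.rnDeriv ν x = μ {x} / ν {x} := by
  rw [ENNReal.eq_div_iff hx (measure_ne_top ν _), mul_comm,
    ← Measure.setLIntegral_rnDeriv hμν, lintegral_singleton]

theorem llr_apply_of_singleton {X : Type*} [MeasurableSpace X] [MeasurableSingletonClass X]
    {μ ν : Measure X} [SigmaFinite μ] [IsFiniteMeasure ν] (hμν : μ ≪ ν) {x : X}
    (hx : ν {x} ≠ 0) : llr μ ν x = Real.log (μ.real {x} / ν.real {x}) := by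
  simp only [llr_def, rnDeriv_apply_of_singleton hμν hx, ENNReal.toReal_div, measureReal_def]

variable {X : Type*} [MeasurableSpace X] [MeasurableSingletonClass X] {x y : X} {p q : I}

theorem bernoulliMeasure_real_singleton_left (hxy : x ≠ y) (p : I) :
    Ber(x, y, p).real {x} = p := by
  simp [hxy.symm]

theorem bernoulliMeasure_real_singleton_right (hxy : x ≠ y) (p : I) :
    Ber(x, y, p).real {y} = 1 - p := by
  simp [hxy]

theorem bernoulliMeasure_absolutelyContinuous (p : I) (hq : (q : ℝ) ∈ Set.Ioo 0 1) :
    Ber(x, y, p) ≪ Ber(x, y, q) := by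
  have hq0 : toNNReal q ≠ 0 := fun h ↦ hq.1.ne' (congrArg NNReal.toReal h)
  have hq1 : toNNReal (σ q) ≠ 0 := fun h ↦ (sub_pos.2 hq.2).ne' (congrArg NNReal.toReal h)
  intro s hs
  simp_all [bernoulliMeasure_def]

theorem klDiv_bernoulliMeasure_ne_top (p : I) (hq : (q : ℝ) ∈ Set.Ioo 0 1) :
    klDiv Ber(x, y, p) Ber(x, y, q) ≠ ∞ :=
  klDiv_ne_top (bernoulliMeasure_absolutelyContinuous p hq) (integrable_bernoulliMeasure x y p _)

theorem toReal_klDiv_bernoulliMeasure (hxy : x ≠ y) (p : I) (hq : (q : ℝ) ∈ Set.Ioo 0 1) :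
    (klDiv Ber(x, y, p) Ber(x, y, q)).toReal =
      p * Real.log (p / q) + (1 - p) * Real.log ((1 - p) / (1 - q)) := by
  have hac : Ber(x, y, p) ≪ Ber(x, y, q) := bernoulliMeasure_absolutelyContinuous p hq
  have hx : Ber(x, y, q) {x} ≠ 0 := by
    rw [← measureReal_ne_zero_iff, bernoulliMeasure_real_singleton_left hxy]
    exact hq.1.ne'
  have hy : Ber(x, y, q) {y} ≠ 0 := by
    rw [← measureReal_ne_zero_iff, bernoulliMeasure_real_singleton_right hxy]
    exact (sub_pos.2 hq.2).ne'
  rw [toReal_klDiv_of_measure_eq hac (by simp), integral_bernoulliMeasure,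
    llr_apply_of_singleton hac hx, llr_apply_of_singleton hac hy]
  simp only [bernoulliMeasure_real_singleton_left hxy, bernoulliMeasure_real_singleton_right hxy,
    smul_eq_mul]

theorem toReal_klDiv_bernoulliMeasure_half (hxy : x ≠ y) (hp : (p : ℝ) = 1 / 2)
    (hq : (q : ℝ) ∈ Set.Ioo 0 1) :
    (klDiv Ber(x, y, p) Ber(x, y, q)).toReal = -Real.log (4 * q * (1 - q)) / 2 := by
  have hq0 : (q : ℝ) ≠ 0 := hq.1.ne'
  have hq1 : 1 - (q : ℝ) ≠ 0 := (sub_pos.2 hq.2).ne'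
  have log_add : Real.log (1 / 2 / q) + Real.log ((1 - 1 / 2) / (1 - q)) =
      -Real.log (4 * q * (1 - q)) := by
    rw [← Real.log_mul (by positivity) (by norm_num [hq1]), ← Real.log_inv]
    congr 1
    field_simp
    norm_num
  rw [toReal_klDiv_bernoulliMeasure hxy p hq, hp, ← log_add]
  ring

theorem toReal_klDiv_bernoulliMeasure_half_le (hxy : x ≠ y) (hp : (p : ℝ) = 1 / 2)
    (hq : (q : ℝ) ∈ Set.Ioo 0 1) :
    (klDiv Ber(x, y, p) Ber(x, y, q)).toReal ≤ (2 * |(p : ℝ) - q|) ^ 2 / (8 * q * (1 - q)) := by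
  have hq0 : 0 < (q : ℝ) := hq.1
  have hq1 : 0 < 1 - (q : ℝ) := sub_pos.2 hq.2
  calc (klDiv Ber(x, y, p) Ber(x, y, q)).toReal
      = -Real.log (4 * q * (1 - q)) / 2 := toReal_klDiv_bernoulliMeasure_half hxy hp hq
    _ ≤ ((4 * q * (1 - q) : ℝ)⁻¹ - 1) / 2 := by
        linarith [Real.one_sub_inv_le_log_of_pos
          (show 0 < 4 * (q : ℝ) * (1 - q) by positivity)]
    _ = (2 * |(p : ℝ) - q|) ^ 2 / (8 * q * (1 - q)) := by
        rw [mul_pow, sq_abs, hp]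
        field_simp
        ring

theorem exists_toReal_klDiv_bernoulliMeasure_half_lt (hxy : x ≠ y) (hp : (p : ℝ) = 1 / 2) {C : ℝ}
    (hC : 1 / 2 < C) :
    ∃ q : I, (q : ℝ) ∈ Set.Ioo 0 1 ∧ p ≠ q ∧
      (klDiv Ber(x, y, p) Ber(x, y, q)).toReal < C * (2 * |(p : ℝ) - q|) ^ 2 := by
  have mem_Ioo : ∀ᶠ q : ℝ in 𝓝 (1 / 2), q ∈ Set.Ioo 0 1 :=
    Ioo_mem_nhds (by norm_num) (by norm_num)
  have one_lt : ∀ᶠ q : ℝ in 𝓝 (1 / 2), 1 < C * (8 * q * (1 - q)) :=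
    (Continuous.tendsto (by fun_prop) _).eventually_const_lt (by linarith)
  obtain ⟨q, ⟨hq, hCq⟩, hne⟩ :=
    ((eventually_nhdsWithin_of_eventually_nhds (mem_Ioo.and one_lt)).and
      (eventually_mem_nhdsWithin (a := (1 / 2 : ℝ)) (s := {1 / 2}ᶜ))).exists
  have hpq : (p : ℝ) ≠ q := hp ▸ Ne.symm hne
  have denom_pos : 0 < 8 * q * (1 - q) :=
    mul_pos (mul_pos (by norm_num) hq.1) (sub_pos.2 hq.2)
  have dist_pos : 0 < (2 * |(p : ℝ) - q|) ^ 2 := by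
    have := abs_pos.2 (sub_ne_zero.2 hpq)
    positivity
  refine ⟨⟨q, hq.1.le, hq.2.le⟩, hq, fun h ↦ hpq (congrArg Subtype.val h), ?_⟩
  refine (toReal_klDiv_bernoulliMeasure_half_le hxy hp hq).trans_lt ?_
  rw [div_lt_iff₀ denom_pos]
  calc (2 * |(p : ℝ) - q|) ^ 2
      < (2 * |(p : ℝ) - q|) ^ 2 * (C * (8 * q * (1 - q))) := lt_mul_of_one_lt_right dist_pos hCq
    _ = C * (2 * |(p : ℝ) - q|) ^ 2 * (8 * q * (1 - q)) := by ring

theorem bernoulliMeasure_l1_dist (hxy : x ≠ y) (p q : I) :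
    |Ber(x, y, p).real {x} - Ber(x, y, q).real {x}| +
      |Ber(x, y, p).real {y} - Ber(x, y, q).real {y}| = 2 * |(p : ℝ) - q| := by
  simp only [bernoulliMeasure_real_singleton_left hxy, bernoulliMeasure_real_singleton_right hxy,
    sub_sub_sub_cancel_left, abs_sub_comm (q : ℝ)]
  ring

theorem bernoulliMeasure_injective (hxy : x ≠ y) : Function.Injective (bernoulliMeasure x y) :=
  fun p q h ↦ Subtype.ext <| by
    rw [← bernoulliMeasure_real_singleton_left hxy p, h, bernoulliMeasure_real_singleton_left hxy]

end Bernoulli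

/-- Optimality of the constant `1/2` in classical universal hypothesis testing: for any
`ε ∈ (0,1)` and `C > 1/2` there are distinct binary distributions `P₀, P₁` such that every
sequence of acceptance regions with type I error at most `ε` has type II error exponent
(liminf of `−(1/n)·ln P₁^{⊗n}(Aₙ)`) strictly below `C·‖P₀ − P₁‖₁²`. -/
theorem no_test_beats_half_constant
    (ε C : ℝ) (hε : ε ∈ Set.Ioo (0 : ℝ) 1) (hC : 1 / 2 < C) :
    ∃ P₀ P₁ : Measure Bool, IsProbabilityMeasure P₀ ∧ IsProbabilityMeasure P₁ ∧ P₀ ≠ P₁ ∧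
      ∀ A : (n : ℕ) → Set (Fin n → Bool),
        (∀ n, MeasurableSet (A n)) →
        (∀ n, ENNReal.ofReal (1 - ε) ≤ Measure.pi (fun _ : Fin n => P₀) (A n)) →
        Filter.liminf
            (fun n : ℕ =>
              -(1 / (n : ℝ)) * Real.log ((Measure.pi (fun _ : Fin n => P₁) (A n)).toReal))
            Filter.atTop <
          C * (|(P₀ {false}).toReal - (P₁ {false}).toReal| +
                |(P₀ {true}).toReal - (P₁ {true}).toReal|) ^ 2 := by
  have hhalf : (1 / 2 : ℝ) ∈ I := by norm_num
  have hft : false ≠ true := Bool.false_ne_true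
  obtain ⟨q, hq, hne, hkl⟩ :=
    exists_toReal_klDiv_bernoulliMeasure_half_lt hft (p := ⟨1 / 2, hhalf⟩) rfl hC
  refine ⟨Ber(false, true, ⟨1 / 2, hhalf⟩), Ber(false, true, q), inferInstance, inferInstance,
    (bernoulliMeasure_injective hft).ne hne, fun A _ hA ↦ ?_⟩
  have hA_real (n : ℕ) : 1 - ε ≤
      (Measure.pi fun _ : Fin n ↦ Ber(false, true, ⟨1 / 2, hhalf⟩)).real (A n) :=
    (ENNReal.ofReal_le_iff_le_toReal (measure_ne_top _ _)).1 (hA n)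
  calc _ ≤ _ := liminf_neg_log_pi_real_le_klDiv (klDiv_bernoulliMeasure_ne_top _ hq)
          (sub_pos.2 hε.2) (.of_forall hA_real)
    _ < _ := hkl
    _ = _ := by rw [← bernoulliMeasure_l1_dist hft]; rfl
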